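/- arXiv:2404.06768 — 3 statements merged into one kernel-verified Lean document; each statement's English description precedes it below -/
import Mathlib

section
/- Let n = 2t be an even integer with n ≥ 6 and let s be an integer with 1 ≤ s ≤ 3^{t−2}, and let W_1, …, W_{2s} be pairwise disjoint t-dimensional F_3-linear subspaces of F_3^n. Then for the code C_f associated to the ternary partial-spread function f: the minimum Hamming weight of a nonzero codeword of C_f equals 2s(3^t − 1), the maximum Hamming weight of a codeword of C_f equals 2·3^{n−1} + 3^t − 2s, and 3·(2s(3^t − 1)) ≤ 2·3^{n−1} + 3^t − 2s; in particular wt_min/wt_max ≤ 1/3 < 2/3, so C_f violates the Ashikhmin–Barg sufficient condition for minimality. -/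
open Matrix Finset

open scoped Function

/-!
Adding a partial spread function `g` to a linear functional `φ` changes the weight of `φ` one
subspace at a time. On a subspace `U` which `φ` does not kill, all values of `φ` are equally
frequent, so translating `φ` by a constant `a ≠ 0` leaves the number of nonzero values unchanged;
on a subspace killed by `φ` that number rises from `0` to `|U|`. In both cases the origin, where
`g` vanishes, has to be discounted once. Two members of a half-dimensional partial spread span the
space, hence a nonzero functional kills at most one of them, which leaves five possible weights:
the least nonzero one is reached at `φ = 0`, the largest when `φ` kills a member.
-/

section HammingNorm

theorem hammingNorm_subtype {α β : Type*} [Fintype α] [Zero β] [DecidableEq β] (p : α → Prop)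
    [DecidablePred p] (h : α → β) :
    hammingNorm (fun x : {x // p x} => h x) = #{x | p x ∧ h x ≠ 0} := by
  rw [hammingNorm, ← card_map (Function.Embedding.subtype p)]
  congr 1
  ext x
  simp [and_comm]

theorem hammingNorm_map_add {A B : Type*} [AddGroup A] [Fintype A] [AddGroup B] [DecidableEq B]
    (φ : A →+ B) (u : A) : hammingNorm (fun x => φ u + φ x) = hammingNorm φ :=
  card_equiv (Equiv.addLeft u) (by simp)

variable {K V : Type*} [Field K] [DecidableEq K] [AddCommGroup V] [Module K V] [Fintype V]

theorem hammingNorm_dual_zero : hammingNorm (0 : Module.Dual K V) = 0 :=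
  hammingNorm_zero

theorem hammingNorm_dual_of_ne_zero {φ : Module.Dual K V} (hφ : φ ≠ 0) :
    hammingNorm φ = (Nat.card K - 1) * Nat.card K ^ (Module.finrank K V - 1) := by
  have card_ker_add : #{x | φ x = 0} + hammingNorm φ = Nat.card V := by
    rw [hammingNorm, card_filter_add_card_filter_not, card_univ, Nat.card_eq_fintype_card]
  have card_ker : #{x | φ x = 0} = Nat.card (LinearMap.ker φ) :=
    (Nat.subtype_card _ (by simp)).symm
  have finrank_ker := Module.Dual.finrank_ker_add_one_of_ne_zero hφ
  rw [card_ker, Module.natCard_eq_pow_finrank (K := K) (V := V),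
    Module.natCard_eq_pow_finrank (K := K) (V := LinearMap.ker φ), ← finrank_ker,
    pow_succ'] at card_ker_add
  rw [← finrank_ker, Nat.add_sub_cancel, Nat.sub_mul, one_mul]
  omega

theorem hammingNorm_const_add_dual (φ : Module.Dual K V) [Decidable (φ = 0)] {a : K}
    (ha : a ≠ 0) :
    hammingNorm (fun x => a + φ x) = hammingNorm φ + if φ = 0 then Nat.card V else 0 := by
  split_ifs with hφ
  · subst hφ
    simp [hammingNorm, ha]
  · obtain ⟨u, rfl⟩ := LinearMap.surjective hφ a
    exact hammingNorm_map_add φ.toAddMonoidHom u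

end HammingNorm

section PartialSpread

variable {K V ι : Type*} [Field K] [AddCommGroup V] [Module K V]

/-- `W` is a partial `t`-spread: a family of `t`-dimensional subspaces meeting pairwise only
in `0`. -/
structure IsPartialSpread (W : ι → Submodule K V) (t : ℕ) : Prop where
  finrank_eq : ∀ k, Module.finrank K (W k) = t
  pairwise_disjoint : Pairwise (Disjoint on W)

/-- `f` is the partial spread function of the family `W` with values `a`: it equals `a k` at the
nonzero vectors of `W k` and vanishes at `0` and outside all the subspaces. Stated as
a predicate on `f`, since overlapping subspaces with different values admit no such function. -/
structure IsPartialSpreadFunction (W : ι → Submodule K V) (a : ι → K) (f : V → K) : Prop where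
  apply_of_mem : ∀ {x k}, x ≠ 0 → x ∈ W k → f x = a k
  apply_zero : f 0 = 0
  apply_of_forall_notMem : ∀ {x}, (∀ k, x ∉ W k) → f x = 0

theorem isPartialSpreadFunction_ite {W : ι → Submodule K V} {p : ι → Prop} [DecidablePred p]
    {b c : K} {f : V → K} (hb : ∀ x k, x ≠ 0 → x ∈ W k → p k → f x = b)
    (hc : ∀ x k, x ≠ 0 → x ∈ W k → ¬p k → f x = c)
    (h0 : ∀ x, (x = 0 ∨ ∀ k, x ∉ W k) → f x = 0) :
    IsPartialSpreadFunction W (fun k => if p k then b else c) f where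
  apply_of_mem hx hxk := by
    split_ifs with hp
    exacts [hb _ _ hx hxk hp, hc _ _ hx hxk hp]
  apply_zero := h0 0 (Or.inl rfl)
  apply_of_forall_notMem hx := h0 _ (Or.inr hx)

theorem IsPartialSpreadFunction.const_mul {W : ι → Submodule K V} {a : ι → K} {f : V → K}
    (hf : IsPartialSpreadFunction W a f) (α : K) :
    IsPartialSpreadFunction W (fun k => α * a k) (fun x => α * f x) where
  apply_of_mem hx hxk := by rw [hf.apply_of_mem hx hxk]
  apply_zero := by rw [hf.apply_zero, mul_zero]
  apply_of_forall_notMem hx := by rw [hf.apply_of_forall_notMem hx, mul_zero]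

variable [Fintype V]

open Classical in
/-- The finite set of nonzero vectors of a subspace. Disjoint subspaces have disjoint sets of
nonzero vectors, which makes these the pieces over which weights are summed. -/
noncomputable def nonzeroVectors (U : Submodule K V) : Finset V := {x | x ∈ U ∧ x ≠ 0}

theorem mem_nonzeroVectors {U : Submodule K V} {x : V} :
    x ∈ nonzeroVectors U ↔ x ∈ U ∧ x ≠ 0 := by
  simp [nonzeroVectors]

theorem disjoint_nonzeroVectors {U U' : Submodule K V} (h : Disjoint U U') :
    Disjoint (nonzeroVectors U) (nonzeroVectors U') := by
  rw [Finset.disjoint_left]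
  intro x hx hx'
  rw [mem_nonzeroVectors] at hx hx'
  exact hx.2 (Submodule.disjoint_def.mp h x hx.1 hx'.1)

variable [DecidableEq K]

open Classical in
theorem hammingNorm_restrict_submodule (U : Submodule K V) (h : V → K) :
    hammingNorm (fun x : U => h x) =
      #{x ∈ nonzeroVectors U | h x ≠ 0} + if h 0 = 0 then 0 else 1 := by
  have hsplit : hammingNorm (fun x : U => h x) =
      #{x ∈ nonzeroVectors U | h x ≠ 0} + #{x ∈ ({0} : Finset V) | h x ≠ 0} := by
    rw [← card_union_of_disjoint, ← filter_union]
    · refine (hammingNorm_subtype (· ∈ U) h).trans (congrArg card ?_)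
      ext x
      by_cases hx : x = 0 <;> simp [mem_nonzeroVectors, hx]
    · exact disjoint_filter_filter (by simp [mem_nonzeroVectors])
  rw [hsplit, filter_singleton]
  split_ifs <;> simp_all

open Classical in
theorem card_filter_const_add_dual_nonzeroVectors (φ : Module.Dual K V) (U : Submodule K V)
    {a : K} (ha : a ≠ 0) :
    #{x ∈ nonzeroVectors U | a + φ x ≠ 0} + 1 =
      #{x ∈ nonzeroVectors U | φ x ≠ 0} + if U ≤ LinearMap.ker φ then Nat.card U else 0 := by
  have translate := hammingNorm_const_add_dual (φ ∘ₗ U.subtype) ha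
  have weight_translate := hammingNorm_restrict_submodule U fun x => a + φ x
  have weight := hammingNorm_restrict_submodule U φ
  simp only [map_zero, add_zero, ha, if_true, if_false] at weight weight_translate
  simp only [LinearMap.le_ker_iff_comp_subtype_eq_zero]
  rw [← weight_translate, ← weight]
  exact translate

variable [Fintype ι] {W : ι → Submodule K V} {a : ι → K} {f : V → K}

open Classical in
theorem hammingNorm_eq_add_sum_nonzeroVectors (hW : Pairwise (Disjoint on W)) (h : V → K) :
    hammingNorm h = #{x ∈ (univ.biUnion fun k => nonzeroVectors (W k))ᶜ | h x ≠ 0} +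
      ∑ k, #{x ∈ nonzeroVectors (W k) | h x ≠ 0} := by
  simp only [hammingNorm, card_filter]
  rw [← sum_biUnion fun i _ j _ hij => disjoint_nonzeroVectors (hW hij), add_comm,
    sum_add_sum_compl]

open Classical in
theorem hammingNorm_partialSpreadFunction_add_dual (hW : Pairwise (Disjoint on W))
    (ha : ∀ k, a k ≠ 0) (hf : IsPartialSpreadFunction W a f) (φ : Module.Dual K V) :
    hammingNorm (fun x => f x + φ x) + Fintype.card ι =
      hammingNorm φ + ∑ k with W k ≤ LinearMap.ker φ, Nat.card (W k) := by
  have off_spread : ∀ x ∈ (univ.biUnion fun k => nonzeroVectors (W k))ᶜ, f x = 0 := by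
    intro x hx
    by_cases hx0 : x = 0
    · rw [hx0, hf.apply_zero]
    · exact hf.apply_of_forall_notMem (by simpa [mem_nonzeroVectors, hx0] using hx)
  have on_member : ∀ k, ∀ x ∈ nonzeroVectors (W k), f x = a k := fun k x hx =>
    hf.apply_of_mem (mem_nonzeroVectors.mp hx).2 (mem_nonzeroVectors.mp hx).1
  calc hammingNorm (fun x => f x + φ x) + Fintype.card ι
      = #{x ∈ (univ.biUnion fun k => nonzeroVectors (W k))ᶜ | φ x ≠ 0} +
          ∑ k, (#{x ∈ nonzeroVectors (W k) | a k + φ x ≠ 0} + 1) := by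
        rw [hammingNorm_eq_add_sum_nonzeroVectors hW, add_assoc, sum_add_distrib,
          Fintype.card_eq_sum_ones]
        congr 2
        · exact filter_congr fun x hx => by rw [off_spread x hx, zero_add]
        · exact sum_congr rfl fun k _ =>
            congrArg card (filter_congr fun x hx => by rw [on_member k x hx])
    _ = hammingNorm φ + ∑ k with W k ≤ LinearMap.ker φ, Nat.card (W k) := by
        simp only [card_filter_const_add_dual_nonzeroVectors φ _ (ha _)]
        rw [sum_add_distrib, ← add_assoc, ← hammingNorm_eq_add_sum_nonzeroVectors hW, sum_filter]

end PartialSpread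

section HalfDimensional

variable {K V ι : Type*} [Field K] [AddCommGroup V] [Module K V]

open Classical in
theorem card_filter_le_ker_le_one [Fintype ι] {W : ι → Submodule K V}
    (hW : Pairwise (Codisjoint on W)) {φ : Module.Dual K V} (hφ : φ ≠ 0) :
    #{k | W k ≤ LinearMap.ker φ} ≤ 1 := by
  refine card_le_one.mpr fun i hi j hj => by_contra fun hij => hφ ?_
  rw [mem_filter_univ] at hi hj
  exact LinearMap.ker_eq_top.mp (top_le_iff.mp ((hW hij).eq_top.ge.trans (sup_le hi hj)))

theorem IsPartialSpread.pairwise_codisjoint [FiniteDimensional K V] {t : ℕ}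
    {W : ι → Submodule K V} (hW : IsPartialSpread W t) (hV : Module.finrank K V = 2 * t) :
    Pairwise (Codisjoint on W) := fun i j hij =>
  have finrank_le : Module.finrank K V ≤ Module.finrank K (W i) + Module.finrank K (W j) := by
    rw [hV, hW.finrank_eq, hW.finrank_eq, two_mul]
  ((Submodule.isCompl_iff_disjoint _ _ finrank_le).mpr (hW.pairwise_disjoint hij)).codisjoint

end HalfDimensional

section Code

variable {K V ι : Type*} [Field K] [AddCommGroup V] [Module K V]

/-- The word `α f + φ`, indexed by the nonzero vectors. The linear functional `φ` stands for the
coordinate expression `x ↦ w ⬝ᵥ x`. -/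
def codeword (f : V → K) (α : K) (φ : Module.Dual K V) : {x : V // x ≠ 0} → K :=
  fun x => α * f x + φ x

/-- The linear code `C_f` spanned by the function `f` and the linear functionals, as a set of
words indexed by the nonzero vectors. -/
def functionCode (f : V → K) : Set ({x : V // x ≠ 0} → K) :=
  {c | ∃ α φ, c = codeword f α φ}

theorem codeword_zero_zero (f : V → K) : codeword f 0 0 = 0 := by
  ext x
  simp [codeword]

theorem functionCode_eq_dotProduct {m : Type*} [Fintype m] (f : (m → K) → K) :
    functionCode f = {c | ∃ (α : K) (w : m → K), c = fun x => α * f x.1 + w ⬝ᵥ x.1} := by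
  classical
  ext c
  exact exists_congr fun α => (dotProductEquiv K m).surjective.exists

variable [Fintype V] [DecidableEq V] [DecidableEq K]

theorem hammingNorm_codeword {f : V → K} (hf : f 0 = 0) (α : K) (φ : Module.Dual K V) :
    hammingNorm (codeword f α φ) = hammingNorm (fun x => α * f x + φ x) := by
  refine (hammingNorm_subtype (· ≠ 0) fun x => α * f x + φ x).trans (congrArg card ?_)
  ext x
  simp only [mem_filter_univ, and_iff_right_iff_imp]
  rintro hx rfl
  simp [hf] at hx

variable [Fintype ι] {W : ι → Submodule K V} {a : ι → K} {f : V → K} {t : ℕ}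

theorem hammingNorm_codeword_zero_left (hf : f 0 = 0) (φ : Module.Dual K V) :
    hammingNorm (codeword f 0 φ) = hammingNorm φ := by
  rw [hammingNorm_codeword hf]
  simp only [zero_mul, zero_add]

open Classical in
theorem IsPartialSpread.hammingNorm_codeword_add_card (hW : IsPartialSpread W t)
    (ha : ∀ k, a k ≠ 0) (hf : IsPartialSpreadFunction W a f)
    {α : K} (hα : α ≠ 0) (φ : Module.Dual K V) :
    hammingNorm (codeword f α φ) + Fintype.card ι =
      hammingNorm φ + #{k | W k ≤ LinearMap.ker φ} * Nat.card K ^ t := by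
  rw [hammingNorm_codeword hf.apply_zero,
    hammingNorm_partialSpreadFunction_add_dual hW.pairwise_disjoint
      (fun k => mul_ne_zero hα (ha k)) (hf.const_mul α)]
  simp only [Module.natCard_eq_pow_finrank (K := K) (V := W _), hW.finrank_eq, sum_const,
    smul_eq_mul]

theorem IsPartialSpread.hammingNorm_codeword_zero_right (hW : IsPartialSpread W t)
    (ha : ∀ k, a k ≠ 0) (hf : IsPartialSpreadFunction W a f) {α : K} (hα : α ≠ 0) :
    hammingNorm (codeword f α 0) = Fintype.card ι * (Nat.card K ^ t - 1) := by
  have weight := hW.hammingNorm_codeword_add_card ha hf hα 0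
  simp only [LinearMap.ker_zero, le_top, filter_true, card_univ, hammingNorm_dual_zero,
    zero_add] at weight
  rw [Nat.mul_sub_one, ← weight, Nat.add_sub_cancel]

theorem IsPartialSpread.exists_hammingNorm_codeword_add_card_eq [Nonempty ι]
    (hW : IsPartialSpread W t) (hV : Module.finrank K V = 2 * t) (ht : 0 < t)
    (ha : ∀ k, a k ≠ 0) (hf : IsPartialSpreadFunction W a f) :
    ∃ φ, hammingNorm (codeword f 1 φ) + Fintype.card ι =
      (Nat.card K - 1) * Nat.card K ^ (2 * t - 1) + Nat.card K ^ t := by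
  classical
  obtain ⟨k⟩ := ‹Nonempty ι›
  have proper : W k < ⊤ := Submodule.lt_top_of_finrank_lt_finrank (by rw [hW.finrank_eq, hV]; omega)
  obtain ⟨φ, hφ, hker⟩ := Submodule.exists_le_ker_of_lt_top _ proper
  have card_killed : #{k | W k ≤ LinearMap.ker φ} = 1 :=
    (card_filter_le_ker_le_one (hW.pairwise_codisjoint hV) hφ).antisymm
      (card_pos.mpr ⟨k, by simpa using hker⟩)
  refine ⟨φ, ?_⟩
  rw [hW.hammingNorm_codeword_add_card ha hf one_ne_zero, hammingNorm_dual_of_ne_zero hφ, hV,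
    card_killed, one_mul]

theorem IsPartialSpread.card_mul_le_hammingNorm_codeword (hW : IsPartialSpread W t)
    (hV : Module.finrank K V = 2 * t) (ht : 0 < t) (ha : ∀ k, a k ≠ 0)
    (hf : IsPartialSpreadFunction W a f)
    (hcard : Fintype.card ι ≤ (Nat.card K - 1) * Nat.card K ^ (t - 1))
    {α : K} {φ : Module.Dual K V} (hc : codeword f α φ ≠ 0) :
    Fintype.card ι * (Nat.card K ^ t - 1) ≤ hammingNorm (codeword f α φ) := by
  classical
  have card_mul_le : Fintype.card ι * Nat.card K ^ t ≤
      (Nat.card K - 1) * Nat.card K ^ (2 * t - 1) := by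
    rw [show 2 * t - 1 = t - 1 + t by omega, pow_add, ← mul_assoc]
    gcongr
  rw [Nat.mul_sub_one]
  by_cases hφ : φ = 0
  · subst hφ
    have hα : α ≠ 0 := by
      rintro rfl
      exact hc (codeword_zero_zero f)
    rw [hW.hammingNorm_codeword_zero_right ha hf hα, Nat.mul_sub_one]
  by_cases hα : α = 0
  · subst hα
    rw [hammingNorm_codeword_zero_left hf.apply_zero, hammingNorm_dual_of_ne_zero hφ, hV]
    omega
  · have weight := hW.hammingNorm_codeword_add_card ha hf hα φ
    rw [hammingNorm_dual_of_ne_zero hφ, hV] at weight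
    omega

theorem IsPartialSpread.hammingNorm_codeword_add_card_le [Finite K] (hW : IsPartialSpread W t)
    (hV : Module.finrank K V = 2 * t) (ht : 0 < t) (ha : ∀ k, a k ≠ 0)
    (hf : IsPartialSpreadFunction W a f)
    (hcard : Fintype.card ι ≤ (Nat.card K - 1) * Nat.card K ^ (t - 1) + 1)
    (α : K) (φ : Module.Dual K V) :
    hammingNorm (codeword f α φ) + Fintype.card ι ≤
      (Nat.card K - 1) * Nat.card K ^ (2 * t - 1) + Nat.card K ^ t := by
  classical
  have card_mul_le : Fintype.card ι * Nat.card K ^ t ≤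
      (Nat.card K - 1) * Nat.card K ^ (2 * t - 1) + Nat.card K ^ t := by
    rw [show 2 * t - 1 = t - 1 + t by omega, pow_add, ← mul_assoc, ← Nat.succ_mul]
    gcongr
  have card_le : Fintype.card ι ≤ Nat.card K ^ t := by
    have pow_pos : 0 < Nat.card K ^ (t - 1) := pow_pos Nat.card_pos _
    have pow_eq : Nat.card K ^ t = (Nat.card K - 1) * Nat.card K ^ (t - 1) +
        Nat.card K ^ (t - 1) := by
      rw [← Nat.succ_mul, Nat.succ_eq_add_one, Nat.sub_add_cancel Nat.card_pos,
        mul_pow_sub_one ht.ne']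
    omega
  by_cases hα : α = 0
  · subst hα
    by_cases hφ : φ = 0
    · subst hφ
      rw [codeword_zero_zero, hammingNorm_zero]
      omega
    · rw [hammingNorm_codeword_zero_left hf.apply_zero, hammingNorm_dual_of_ne_zero hφ, hV]
      omega
  rw [hW.hammingNorm_codeword_add_card ha hf hα]
  by_cases hφ : φ = 0
  · subst hφ
    simpa [hammingNorm_dual_zero] using card_mul_le
  · rw [hammingNorm_dual_of_ne_zero hφ, hV]
    gcongr
    exact mul_le_of_le_one_left' (card_filter_le_ker_le_one (hW.pairwise_codisjoint hV) hφ)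

theorem IsPartialSpread.isLeast_hammingNorm [Finite K] [Nonempty ι] (hW : IsPartialSpread W t)
    (hV : Module.finrank K V = 2 * t) (ht : 0 < t) (ha : ∀ k, a k ≠ 0)
    (hf : IsPartialSpreadFunction W a f)
    (hcard : Fintype.card ι ≤ (Nat.card K - 1) * Nat.card K ^ (t - 1)) :
    IsLeast {m | ∃ c ∈ functionCode f, c ≠ 0 ∧ hammingNorm c = m}
      (Fintype.card ι * (Nat.card K ^ t - 1)) := by
  have weight := hW.hammingNorm_codeword_zero_right ha hf one_ne_zero
  refine ⟨⟨codeword f 1 0, ⟨1, 0, rfl⟩, ?_, weight⟩, ?_⟩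
  · rw [← hammingNorm_pos_iff, weight]
    exact Nat.mul_pos Fintype.card_pos
      (Nat.sub_pos_of_lt (Nat.one_lt_pow ht.ne' Finite.one_lt_card))
  · rintro _ ⟨_, ⟨α, φ, rfl⟩, hc, rfl⟩
    exact hW.card_mul_le_hammingNorm_codeword hV ht ha hf hcard hc

theorem IsPartialSpread.isGreatest_hammingNorm [Finite K] [Nonempty ι]
    (hW : IsPartialSpread W t) (hV : Module.finrank K V = 2 * t) (ht : 0 < t)
    (ha : ∀ k, a k ≠ 0) (hf : IsPartialSpreadFunction W a f)
    (hcard : Fintype.card ι ≤ (Nat.card K - 1) * Nat.card K ^ (t - 1) + 1) :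
    IsGreatest {m | ∃ c ∈ functionCode f, hammingNorm c = m}
      ((Nat.card K - 1) * Nat.card K ^ (2 * t - 1) + Nat.card K ^ t - Fintype.card ι) := by
  constructor
  · obtain ⟨φ, weight⟩ := hW.exists_hammingNorm_codeword_add_card_eq hV ht ha hf
    exact ⟨codeword f 1 φ, ⟨1, φ, rfl⟩, Nat.eq_sub_of_add_eq weight⟩
  · rintro _ ⟨_, ⟨α, φ, rfl⟩, rfl⟩
    exact Nat.le_sub_of_add_le (hW.hammingNorm_codeword_add_card_le hV ht ha hf hcard α φ)

end Code

theorem mul_mul_pow_sub_one_le {q r t : ℕ} (hq : 0 < q) (ht : 2 ≤ t)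
    (hr : r ≤ (q - 1) * q ^ (t - 2)) :
    q * (r * (q ^ t - 1)) ≤ (q - 1) * q ^ (2 * t - 1) + q ^ t - r := by
  have mul_le : q * (r * q ^ t) ≤ (q - 1) * q ^ (2 * t - 1) :=
    calc q * (r * q ^ t) ≤ q * ((q - 1) * q ^ (t - 2) * q ^ t) := by gcongr
      _ = (q - 1) * q ^ (2 * t - 1) := by
        rw [show 2 * t - 1 = t - 2 + t + 1 by omega]
        ring
  have le_mul : r ≤ q * r := Nat.le_mul_of_pos_left r hq
  have le_mul_pow : q * r ≤ q * (r * q ^ t) := by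
    gcongr
    exact Nat.le_mul_of_pos_right r (pow_pos hq t)
  rw [Nat.mul_sub_one, Nat.mul_sub]
  omega

theorem stmt1_general {K V ι : Type*} [Field K] [Finite K] [DecidableEq K] [AddCommGroup V]
    [Module K V] [Fintype V] [DecidableEq V] [Fintype ι] [Nonempty ι] {t : ℕ} (ht : 2 ≤ t)
    (hV : Module.finrank K V = 2 * t) {W : ι → Submodule K V} (hW : IsPartialSpread W t)
    (hcard : Fintype.card ι ≤ (Nat.card K - 1) * Nat.card K ^ (t - 2))
    {a : ι → K} (ha : ∀ k, a k ≠ 0) {f : V → K} (hf : IsPartialSpreadFunction W a f) :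
    IsLeast {m | ∃ c ∈ functionCode f, c ≠ 0 ∧ hammingNorm c = m}
      (Fintype.card ι * (Nat.card K ^ t - 1)) ∧
    IsGreatest {m | ∃ c ∈ functionCode f, hammingNorm c = m}
      ((Nat.card K - 1) * Nat.card K ^ (2 * t - 1) + Nat.card K ^ t - Fintype.card ι) ∧
    Nat.card K * (Fintype.card ι * (Nat.card K ^ t - 1)) ≤
      (Nat.card K - 1) * Nat.card K ^ (2 * t - 1) + Nat.card K ^ t - Fintype.card ι := by
  have hcard' : Fintype.card ι ≤ (Nat.card K - 1) * Nat.card K ^ (t - 1) :=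
    hcard.trans (by gcongr; exacts [Nat.card_pos, by omega])
  exact ⟨hW.isLeast_hammingNorm hV (by omega) ha hf hcard',
    hW.isGreatest_hammingNorm hV (by omega) ha hf (hcard'.trans (Nat.le_succ _)),
    mul_mul_pow_sub_one_le Nat.card_pos ht hcard⟩

theorem stmt1 (t n s : ℕ) (ht : n = 2 * t) (hn : 6 ≤ n) (hs : 1 ≤ s)
    (hs2 : s ≤ 3 ^ (t - 2))
    (W : Fin (2 * s) → Submodule (ZMod 3) (Fin n → ZMod 3))
    (hdim : ∀ k, Module.finrank (ZMod 3) (W k) = t)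
    (hdisj : ∀ i j, i ≠ j → W i ⊓ W j = ⊥)
    (f : (Fin n → ZMod 3) → ZMod 3)
    (hf1 : ∀ (x : Fin n → ZMod 3) (k : Fin (2 * s)), x ≠ 0 → x ∈ W k → (k : ℕ) < s → f x = 1)
    (hf2 : ∀ (x : Fin n → ZMod 3) (k : Fin (2 * s)), x ≠ 0 → x ∈ W k → s ≤ (k : ℕ) → f x = 2)
    (hf0 : ∀ x : Fin n → ZMod 3, (x = 0 ∨ ∀ k, x ∉ W k) → f x = 0)
    (C : Set ({x : Fin n → ZMod 3 // x ≠ 0} → ZMod 3))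
    (hC : C = {c | ∃ (α : ZMod 3) (w : Fin n → ZMod 3),
      c = fun x => α * f x.1 + w ⬝ᵥ x.1})
    :
    IsLeast {m : ℕ | ∃ c ∈ C, c ≠ 0 ∧ hammingNorm c = m} (2 * s * (3 ^ t - 1)) ∧
    IsGreatest {m : ℕ | ∃ c ∈ C, hammingNorm c = m} (2 * 3 ^ (n - 1) + 3 ^ t - 2 * s) ∧
    3 * (2 * s * (3 ^ t - 1)) ≤ 2 * 3 ^ (n - 1) + 3 ^ t - 2 * s := by
  subst ht hC
  have : NeZero s := ⟨by omega⟩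
  have spread : IsPartialSpread W t := ⟨hdim, fun i j hij => disjoint_iff.mpr (hdisj i j hij)⟩
  have spread_function : IsPartialSpreadFunction W (fun k => if (k : ℕ) < s then 1 else 2) f :=
    isPartialSpreadFunction_ite hf1 (fun x k hx hxk hk => hf2 x k hx hxk (not_lt.mp hk)) hf0
  have values_ne_zero (k : Fin (2 * s)) : (if (k : ℕ) < s then 1 else 2 : ZMod 3) ≠ 0 := by
    split_ifs <;> decide
  simpa [functionCode_eq_dotProduct] using
    stmt1_general (by omega) (by simp) spread (by simpa using hs2) values_ne_zero spread_function
end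

section
/- Let n = 2t be an even integer with n ≥ 6, let s be an integer with 2 ≤ s ≤ 3^t − 1 (i.e. s ∉ {1, 3^t, 3^t + 1}), and let W_1, …, W_s be pairwise disjoint t-dimensional F_3-linear subspaces of F_3^n. Then the linear code C_f associated to the characteristic function f is a minimal linear code of length 3^n − 1: for every codeword c ∈ C_f with c ≠ 0 and every codeword c' ∈ C_f whose support is contained in the support of c, there exists λ ∈ F_3 with c' = λ·c. -/
open Matrix Finset

/-!
Write `f` for the indicator function of the nonzero vectors in the union of the `W k`. Minimality
says that if `β f + ψ` vanishes wherever `α f + φ` does, then it is a multiple of `α f + φ`.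

If `α ≠ 0`, scale to `α = -1`: the functional `l = ψ + β φ` vanishes wherever `f = φ`, and has to
be shown to be `0`. If `φ = 0`, then `l` vanishes off the `W k`, and these are too few to cover the
affine hyperplane `l = 1`. If `φ ≠ 0`, then `l` vanishes on every `W k` on which `φ` is not `0`,
because it vanishes on the affine hyperplane `φ = 1` of `W k`. At most one `W i` remains; a nonzero
`y ∈ W j` with `φ y = 0` translates `W i` off itself, to points where `l` is known to vanish.

If `α = 0`, then `ψ` is constantly `-β` on the nonzero vectors of `W k ∩ ker φ`. A functional that
is constant on the nonzero vectors of a space with more than two elements is `0` there, so `β = 0`,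
and `ψ` is a multiple of `φ` since it vanishes on `ker φ`.
-/

section LinearForms

variable {K V : Type*} [Field K] [AddCommGroup V] [Module K V]

theorem card_mul_card_affineHyperplane {φ : Module.Dual K V} (hφ : φ ≠ 0) :
    Nat.card K * Nat.card {x // φ x = 1} = Nat.card V := by
  obtain ⟨u, hu⟩ := LinearMap.surjective hφ 1
  let e : K × {x // φ x = 1} ≃ V :=
    { toFun := fun p => p.2 + p.1 • u
      invFun := fun v => (φ v - 1, ⟨v - (φ v - 1) • u, by simp [hu]⟩)
      left_inv := fun ⟨c, x, hx⟩ => by simp [hu, hx]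
      right_inv := fun v => by simp }
  rw [← Nat.card_prod, Nat.card_congr e]

theorem card_mul_card_affineHyperplane_le (φ : Module.Dual K V) :
    Nat.card K * Nat.card {x // φ x = 1} ≤ Nat.card V := by
  rcases eq_or_ne φ 0 with rfl | hφ
  · simp
  · exact (card_mul_card_affineHyperplane hφ).le

theorem exists_eq_one_forall_notMem {ι : Type*} [Fintype ι] [Finite V]
    {W : ι → Submodule K V} (hW : ∑ k, Nat.card (W k) < Nat.card V)
    {φ : Module.Dual K V} (hφ : φ ≠ 0) : ∃ x, φ x = 1 ∧ ∀ k, x ∉ W k := by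
  by_contra! hcover
  let toHyperplane : (Σ k, {x : W k // φ.domRestrict (W k) x = 1}) → {x // φ x = 1} :=
    fun p => ⟨p.2.1, p.2.2⟩
  have hsurj : Function.Surjective toHyperplane := fun ⟨x, hx⟩ =>
    let ⟨k, hk⟩ := hcover x hx
    ⟨⟨k, ⟨x, hk⟩, hx⟩, rfl⟩
  refine hW.not_ge ?_
  calc Nat.card V = Nat.card K * Nat.card {x // φ x = 1} := (card_mul_card_affineHyperplane hφ).symm
    _ ≤ Nat.card K * ∑ k, Nat.card {x : W k // φ.domRestrict (W k) x = 1} := by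
      rw [← Nat.card_sigma]
      exact Nat.mul_le_mul_left _ (Nat.card_le_card_of_surjective _ hsurj)
    _ = ∑ k, Nat.card K * Nat.card {x : W k // φ.domRestrict (W k) x = 1} := mul_sum ..
    _ ≤ ∑ k, Nat.card (W k) := sum_le_sum fun k _ => card_mul_card_affineHyperplane_le _

theorem eq_zero_of_forall_eq_one {φ l : Module.Dual K V} (hφ : φ ≠ 0)
    (h : ∀ x, φ x = 1 → l x = 0) : l = 0 := by
  obtain ⟨u, hu⟩ := LinearMap.surjective hφ 1
  ext x
  have hx : l (x + (1 - φ x) • u) = 0 := h _ (by simp [hu])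
  simpa [h u hu] using hx

theorem exists_eq_smul_of_ker_le {φ ψ : Module.Dual K V} (h : ∀ x, φ x = 0 → ψ x = 0) :
    ∃ c : K, ψ = c • φ := by
  have hmem : ψ ∈ Submodule.span K (Set.range fun _ : Unit => φ) :=
    mem_span_of_iInf_ker_le_ker fun x hx => h x (by simpa using hx)
  rw [Set.range_const, Submodule.mem_span_singleton] at hmem
  exact hmem.imp fun _ => Eq.symm

theorem exists_ne_zero_map_eq_zero [Finite K] (hV : Nat.card K < Nat.card V)
    (φ : Module.Dual K V) : ∃ y, y ≠ 0 ∧ φ y = 0 := by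
  by_contra! h
  have hinj : Function.Injective φ :=
    (injective_iff_map_eq_zero φ).2 fun y hy => by_contra fun hy0 => h y hy0 hy
  exact hV.not_ge (Nat.card_le_card_of_injective φ hinj)

theorem eq_zero_of_forall_ker_eq [Finite K] [Finite V] (hV : Nat.card K * 2 < Nat.card V)
    {φ ψ : Module.Dual K V} {c : K} (h : ∀ y, y ≠ 0 → φ y = 0 → ψ y = c) : c = 0 := by
  classical
  have := Fintype.ofFinite K
  have := Fintype.ofFinite V
  rw [Nat.card_eq_fintype_card, Nat.card_eq_fintype_card] at hV
  obtain ⟨r, hr⟩ := Fintype.exists_lt_card_fiber_of_mul_lt_card φ hV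
  obtain ⟨x, hx, y, hy, z, hz, hxy, hxz, hyz⟩ := two_lt_card.1 hr
  simp only [mem_filter_univ] at hx hy hz
  have hψxy : ψ (x - y) = c := h _ (sub_ne_zero.2 hxy) (by simp [hx, hy])
  have hψxz : ψ (x - z) = c := h _ (sub_ne_zero.2 hxz) (by simp [hx, hz])
  have hψyz : ψ (y - z) = c := h _ (sub_ne_zero.2 hyz) (by simp [hy, hz])
  rw [map_sub] at hψxy hψxz hψyz
  linear_combination hψxz - hψxy - hψyz

end LinearForms

section Code

variable {K V : Type*} [Field K] [AddCommGroup V] [Module K V]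

/-- A linear code is minimal if the support of a nonzero codeword contains the supports of no
codewords other than its own multiples. -/
def IsMinimalCode {X : Type*} (C : Submodule K (X → K)) : Prop :=
  ∀ c ∈ C, c ≠ 0 → ∀ c' ∈ C, Function.support c' ⊆ Function.support c → ∃ a : K, c' = a • c

/-- The encoder of the code `C_f`, sending `(α, φ)` to the word `α f + φ` on the nonzero vectors.
Linear functionals replace the dot products `w ⬝ᵥ ·`, so that no basis of `V` is needed. -/
def encoder (f : V → K) : K × Module.Dual K V →ₗ[K] ({x : V // x ≠ 0} → K) where
  toFun p x := p.1 * f x + p.2 x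
  map_add' p q := by
    ext x
    simp only [Prod.fst_add, Prod.snd_add, LinearMap.add_apply, Pi.add_apply]
    ring
  map_smul' a p := by
    ext x
    simp only [Prod.smul_fst, Prod.smul_snd, LinearMap.smul_apply, Pi.smul_apply, smul_eq_mul,
      RingHom.id_apply]
    ring

/-- The linear code `C_f` of a function `f`. -/
def linearCode (f : V → K) : Submodule K ({x : V // x ≠ 0} → K) := LinearMap.range (encoder f)

theorem coe_linearCode_eq_setOf_dotProduct {m : Type*} [Fintype m] (f : (m → K) → K) :
    (linearCode f : Set ({x : m → K // x ≠ 0} → K)) =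
      {c | ∃ (α : K) (w : m → K), c = fun x => α * f x.1 + w ⬝ᵥ x.1} := by
  classical
  ext c
  constructor
  · rintro ⟨⟨α, φ⟩, rfl⟩
    obtain ⟨w, rfl⟩ := (dotProductEquiv K m).surjective φ
    exact ⟨α, w, rfl⟩
  · rintro ⟨α, w, rfl⟩
    exact ⟨(α, dotProductEquiv K m w), rfl⟩

theorem isMinimalCode_linearCode {f : V → K} (hf : f 0 = 0)
    (h : ∀ (α β : K) (φ ψ : Module.Dual K V),
      (∀ x, α * f x + φ x = 0 → β * f x + ψ x = 0) → ∃ a : K, (β, ψ) = a • (α, φ)) :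
    IsMinimalCode (linearCode f) := by
  rintro _ ⟨⟨α, φ⟩, rfl⟩ - _ ⟨⟨β, ψ⟩, rfl⟩ hsupp
  obtain ⟨a, ha⟩ := h α β φ ψ fun x hx => by
    rcases eq_or_ne x 0 with rfl | hx0
    · simp [hf]
    · by_contra hne
      exact hsupp (a := ⟨x, hx0⟩) hne hx
  exact ⟨a, by rw [ha, map_smul]⟩

end Code

section PartialSpread

variable {K V ι : Type*} [Field K] [AddCommGroup V] [Module K V] {W : ι → Submodule K V}

/-- The characteristic function of a family of subspaces: `1` on their nonzero vectors, `0`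
elsewhere, and in particular `0` at the origin. -/
noncomputable def nonzeroIndicator (W : ι → Submodule K V) : V → K :=
  Set.indicator (⋃ k, (W k : Set V) \ {0}) 1

theorem nonzeroIndicator_of_mem {x : V} {k : ι} (hx : x ≠ 0) (hk : x ∈ W k) :
    nonzeroIndicator W x = 1 := by
  have hmem : x ∈ ⋃ k, (W k : Set V) \ {0} := Set.mem_iUnion_of_mem k ⟨hk, hx⟩
  exact Set.indicator_of_mem hmem 1

theorem nonzeroIndicator_of_forall_notMem {x : V} (hx : ∀ k, x ∉ W k) : nonzeroIndicator W x = 0 :=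
  Set.indicator_of_notMem (by simp [hx]) 1

theorem nonzeroIndicator_zero : nonzeroIndicator W 0 = 0 :=
  Set.indicator_of_notMem (by simp) 1

theorem eq_nonzeroIndicator {f : V → K} (hf1 : ∀ x k, x ≠ 0 → x ∈ W k → f x = 1)
    (hf0 : ∀ x, (x = 0 ∨ ∀ k, x ∉ W k) → f x = 0) : f = nonzeroIndicator W := by
  ext x
  by_cases hx : x = 0 ∨ ∀ k, x ∉ W k
  · rw [hf0 x hx]
    rcases hx with rfl | hx
    exacts [nonzeroIndicator_zero.symm, (nonzeroIndicator_of_forall_notMem hx).symm]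
  · push Not at hx
    obtain ⟨hx0, k, hk⟩ := hx
    rw [hf1 x k hx0 hk, nonzeroIndicator_of_mem hx0 hk]

theorem eqOn_zero_of_not_eqOn_zero {φ l : Module.Dual K V}
    (h : ∀ x, nonzeroIndicator W x = φ x → l x = 0) {k : ι} (hφ : ¬ Set.EqOn φ 0 (W k)) :
    Set.EqOn l 0 (W k) := by
  have hφk : φ.domRestrict (W k) ≠ 0 := fun h0 =>
    hφ fun x hx => LinearMap.congr_fun h0 ⟨x, hx⟩
  have hlk : l.domRestrict (W k) = 0 := eq_zero_of_forall_eq_one hφk fun x hx => by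
    have hφx : φ x = 1 := hx
    have hx0 : (x : V) ≠ 0 := fun hx0 => by simp [hx0] at hφx
    exact h x ((nonzeroIndicator_of_mem hx0 x.2).trans hφx.symm)
  exact fun x hx => LinearMap.congr_fun hlk ⟨x, hx⟩

theorem eqOn_zero_of_eqOn_zero {φ l : Module.Dual K V}
    (h : ∀ x, nonzeroIndicator W x = φ x → l x = 0)
    (hcompl : Pairwise fun i j => IsCompl (W i) (W j)) (hφ : φ ≠ 0)
    {i j : ι} (hij : i ≠ j) (hφi : Set.EqOn φ 0 (W i))
    {y : V} (hy : y ∈ W j) (hy0 : y ≠ 0) (hφy : φ y = 0) : Set.EqOn l 0 (W i) := by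
  have hl : ∀ k, k ≠ i → Set.EqOn l 0 (W k) := fun k hk =>
    eqOn_zero_of_not_eqOn_zero h fun hφk =>
      hφ (LinearMap.ext_on_codisjoint (hcompl hk).codisjoint hφk hφi)
  intro x hx
  have hxy : x + y ∉ W i := fun hmem =>
    hy0 (Submodule.disjoint_def.1 (hcompl hij).disjoint y ((add_mem_cancel_left hx).1 hmem) hy)
  have hlxy : l (x + y) = 0 := by
    by_cases hk : ∃ k, x + y ∈ W k
    · obtain ⟨k, hk⟩ := hk
      exact hl k (fun hki => hxy (hki ▸ hk)) hk
    · push Not at hk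
      have hφx : φ x = 0 := hφi hx
      exact h _ (by rw [nonzeroIndicator_of_forall_notMem hk, map_add, hφx, hφy, add_zero])
  have hly : l y = 0 := hl j hij.symm hy
  simpa [hly] using hlxy

theorem eq_zero_of_nonzeroIndicator_eq_imp [Finite K] [Finite V] [Fintype ι] [Nontrivial ι]
    {φ l : Module.Dual K V} (h : ∀ x, nonzeroIndicator W x = φ x → l x = 0)
    (hcompl : Pairwise fun i j => IsCompl (W i) (W j)) (hlarge : ∀ k, Nat.card K < Nat.card (W k))
    (hfew : ∑ k, Nat.card (W k) < Nat.card V) : l = 0 := by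
  rcases eq_or_ne φ 0 with rfl | hφ
  · by_contra hl
    obtain ⟨x, hlx, hxW⟩ := exists_eq_one_forall_notMem hfew hl
    exact one_ne_zero (hlx.symm.trans (h x (nonzeroIndicator_of_forall_notMem hxW)))
  have hl : ∀ i, Set.EqOn l 0 (W i) := fun i => by
    by_cases hφi : Set.EqOn φ 0 (W i)
    · obtain ⟨j, hji⟩ := exists_ne i
      obtain ⟨y, hy0, hφy⟩ := exists_ne_zero_map_eq_zero (hlarge j) (φ.domRestrict (W j))
      exact eqOn_zero_of_eqOn_zero h hcompl hφ hji.symm hφi y.2 (by simpa using hy0) hφy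
    · exact eqOn_zero_of_not_eqOn_zero h hφi
  obtain ⟨i, j, hij⟩ := exists_pair_ne ι
  exact LinearMap.ext_on_codisjoint (hcompl hij).codisjoint (hl i) (hl j)

theorem coeff_eq_zero_of_forall_ker [Finite K] [Finite V] {k : ι}
    (hlarge : Nat.card K * 2 < Nat.card (W k)) {β : K} {φ ψ : Module.Dual K V}
    (h : ∀ x, φ x = 0 → β * nonzeroIndicator W x + ψ x = 0) : β = 0 := by
  have hconst : ∀ y : W k, y ≠ 0 → φ.domRestrict (W k) y = 0 → ψ.domRestrict (W k) y = -β := by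
    intro y hy0 hφy
    have hy := h y hφy
    rw [nonzeroIndicator_of_mem (by simpa using hy0) y.2, mul_one] at hy
    exact eq_neg_of_add_eq_zero_right hy
  exact neg_eq_zero.1 (eq_zero_of_forall_ker_eq hlarge hconst)

variable [Finite K] [Finite V] [Fintype ι] [Nontrivial ι]

theorem exists_smul_eq_of_zeros_subset (hcompl : Pairwise fun i j => IsCompl (W i) (W j))
    (hlarge : ∀ k, Nat.card K * 2 < Nat.card (W k)) (hfew : ∑ k, Nat.card (W k) < Nat.card V)
    {α β : K} {φ ψ : Module.Dual K V}
    (h : ∀ x, α * nonzeroIndicator W x + φ x = 0 → β * nonzeroIndicator W x + ψ x = 0) :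
    ∃ a : K, (β, ψ) = a • (α, φ) := by
  rcases eq_or_ne α 0 with rfl | hα
  · simp only [zero_mul, zero_add] at h
    obtain ⟨k⟩ : Nonempty ι := inferInstance
    obtain rfl : β = 0 := coeff_eq_zero_of_forall_ker (hlarge k) h
    obtain ⟨a, rfl⟩ : ∃ a : K, ψ = a • φ := exists_eq_smul_of_ker_le (by simpa using h)
    exact ⟨a, by simp⟩
  · have hψ : ψ - (β / α) • φ = 0 := by
      refine eq_zero_of_nonzeroIndicator_eq_imp (W := W) (φ := -α⁻¹ • φ) (fun x hx => ?_) hcompl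
        (fun k => by have := hlarge k; omega) hfew
      simp only [LinearMap.smul_apply, LinearMap.sub_apply, smul_eq_mul] at hx ⊢
      have hβ := h x (by rw [hx]; field_simp; ring)
      rw [hx] at hβ
      linear_combination hβ
    refine ⟨β / α, Prod.ext ?_ (sub_eq_zero.1 hψ)⟩
    simp [hα]

theorem stmt2_general {t : ℕ} (hV : Module.finrank K V = 2 * t)
    (hdim : ∀ k, Module.finrank K (W k) = t) (hdisj : ∀ i j, i ≠ j → W i ⊓ W j = ⊥)
    (hlarge : Nat.card K * 2 < Nat.card K ^ t) (hfew : Fintype.card ι < Nat.card K ^ t) :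
    IsMinimalCode (linearCode (nonzeroIndicator W)) := by
  have hcompl : Pairwise fun i j => IsCompl (W i) (W j) := fun i j hij =>
    (Submodule.isCompl_iff_disjoint _ _ (by rw [hV, hdim, hdim, two_mul])).2
      (disjoint_iff.2 (hdisj i j hij))
  have hcard : ∀ k, Nat.card (W k) = Nat.card K ^ t := fun k => by
    rw [Module.natCard_eq_pow_finrank (K := K), hdim]
  have hsum : ∑ k, Nat.card (W k) < Nat.card V := by
    rw [Module.natCard_eq_pow_finrank (K := K) (V := V), hV, two_mul, pow_add,
      sum_congr rfl fun k _ => hcard k, sum_const, card_univ, smul_eq_mul]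
    exact Nat.mul_lt_mul_of_pos_right hfew (by omega)
  exact isMinimalCode_linearCode nonzeroIndicator_zero fun _ _ _ _ =>
    exists_smul_eq_of_zeros_subset hcompl (fun k => (hcard k).symm ▸ hlarge) hsum

end PartialSpread

theorem stmt2 (t n s : ℕ) (ht : n = 2 * t) (hn : 6 ≤ n) (hs : 2 ≤ s)
    (hs2 : s ≤ 3 ^ t - 1)
    (W : Fin s → Submodule (ZMod 3) (Fin n → ZMod 3))
    (hdim : ∀ k, Module.finrank (ZMod 3) (W k) = t)
    (hdisj : ∀ i j, i ≠ j → W i ⊓ W j = ⊥)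
    (f : (Fin n → ZMod 3) → ZMod 3)
    (hf1 : ∀ (x : Fin n → ZMod 3) (k : Fin s), x ≠ 0 → x ∈ W k → f x = 1)
    (hf0 : ∀ x : Fin n → ZMod 3, (x = 0 ∨ ∀ k, x ∉ W k) → f x = 0)
    (C : Set ({x : Fin n → ZMod 3 // x ≠ 0} → ZMod 3))
    (hC : C = {c | ∃ (α : ZMod 3) (w : Fin n → ZMod 3),
      c = fun x => α * f x.1 + w ⬝ᵥ x.1})
    :
    ∀ c ∈ C, c ≠ 0 → ∀ c' ∈ C, (∀ i, c' i ≠ 0 → c i ≠ 0) →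
      ∃ lam : ZMod 3, c' = lam • c := by
  have : Nontrivial (Fin s) := Fin.nontrivial_iff_two_le.2 hs
  have hpow : 3 ^ 3 ≤ 3 ^ t := Nat.pow_le_pow_right (by norm_num) (by omega)
  rw [hC, ← coe_linearCode_eq_setOf_dotProduct, eq_nonzeroIndicator hf1 hf0]
  exact stmt2_general (by simp [ht]) hdim hdisj (by simp; omega) (by simp; omega)
end

section
/- Let n = 2t be an even integer with n ≥ 6, let s ≥ 1 be an integer with 2s ≠ 3^t + 1, and let W_1, …, W_{2s} be pairwise disjoint t-dimensional F_3-linear subspaces of F_3^n, with f the associated ternary partial-spread function. Then for all pairwise distinct w_1, w_2, w_3 ∈ F_3^n with w_1 + w_2 + w_3 = 0, one has Re(f̂(w_1)) + Re(f̂(w_2)) + Re(f̂(w_3)) ≠ 3^n. -/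
open Matrix Finset

/-!
Write `χ ∘ f = 1 + ∑ k, (χ (e k) - 1) · 1_{W k \ {0}}`, where `e k` is the value of `f` on
`W k \ {0}`. Since `∑ x ∈ W k, ψ x` is `|W k|` or `0`, the coefficient of `χ ∘ f` at a nontrivial
character has real part at most `D = ∑ k, (1 - Re χ (e k))`, while the coefficient at the trivial
character has real part at most `|G| - 7 D` as soon as every `W k` has at least `8` elements. It is
also at least `-|G|`, so `7 D ≤ 2 |G|`. Hence three coefficients at distinct characters have real
parts adding up to at most `|G| - 5 D` if one of the characters is trivial, and to at most
`3 D ≤ 6 |G| / 7` otherwise.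
-/

section CharacterSums

variable {G A ι : Type*} [AddGroup G] [AddGroup A]

/-- `f` is a partial-spread function: the subgroups `W k` meet pairwise trivially, `f` has the
constant value `e k` on `W k \ {0}`, and it vanishes at `0` and outside `⋃ k, W k`. -/
structure IsPartialSpreadFunction_s7 (W : ι → AddSubgroup G) (e : ι → A) (f : G → A) : Prop where
  disjoint : Pairwise fun i j => Disjoint (W i) (W j)
  eq_of_mem : ∀ x k, x ≠ 0 → x ∈ W k → f x = e k
  eq_zero : ∀ x, (x = 0 ∨ ∀ k, x ∉ W k) → f x = 0

/-- The (unnormalised) Fourier coefficient of `χ ∘ f` at `ψ`. The sum has `ψ` in place of the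
customary `ψ⁻¹`. -/
noncomputable def charSum [Fintype G] (χ : AddChar A ℂ) (f : G → A) (ψ : AddChar G ℂ) : ℂ :=
  ∑ x, χ (f x) * ψ x

/-- The total deficit `∑ k, (1 - Re χ (e k))` of the real parts of the values `χ (e k)`, which
measures how far `χ ∘ f` is from the constant `1` for a partial-spread function `f` with
values `e k`. -/
noncomputable def reDeficit [Fintype ι] (χ : AddChar A ℂ) (e : ι → A) : ℝ :=
  ∑ k, (1 - (χ (e k)).re)

lemma one_sub_re_addChar_nonneg [Finite A] (χ : AddChar A ℂ) (a : A) : 0 ≤ 1 - (χ a).re :=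
  sub_nonneg.2 <| (Complex.re_le_norm _).trans_eq (χ.norm_apply a)

lemma one_sub_re_addChar_pos [Finite A] {χ : AddChar A ℂ} {a : A} (ha : χ a ≠ 1) :
    0 < 1 - (χ a).re := by
  refine (one_sub_re_addChar_nonneg χ a).lt_of_ne' fun h => ha ?_
  have hre : (χ a).re = 1 := by linarith
  have him : (χ a).im = 0 := Complex.abs_re_eq_norm.1 (by rw [hre, abs_one, χ.norm_apply])
  exact Complex.ext hre him

lemma reDeficit_pos [Finite A] [Fintype ι] [Nonempty ι] {χ : AddChar A ℂ} {e : ι → A}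
    (he : ∀ k, χ (e k) ≠ 1) : 0 < reDeficit χ e :=
  sum_pos (fun k _ => one_sub_re_addChar_pos (he k)) univ_nonempty

open Classical in
lemma sum_addSubgroup_eq_ite {R : Type*} [CommRing R] [IsDomain R] (H : AddSubgroup G)
    [Fintype H] (ψ : AddChar G R) :
    ∑ x : H, ψ x = if ∀ x ∈ H, ψ x = 1 then (Nat.card H : R) else 0 := by
  have hrestrict : ψ.compAddMonoidHom H.subtype = 0 ↔ ∀ x ∈ H, ψ x = 1 := by
    simp [DFunLike.ext_iff]
  simpa [hrestrict] using (ψ.compAddMonoidHom H.subtype).sum_eq_ite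

lemma IsPartialSpreadFunction_s7.addChar_apply [Fintype ι] {W : ι → AddSubgroup G} {e : ι → A}
    {f : G → A} (hf : IsPartialSpreadFunction_s7 W e f) (χ : AddChar A ℂ) (x : G) :
    χ (f x) = 1 + ∑ k, (χ (e k) - 1) * ((W k : Set G) \ {0}).indicator 1 x := by
  by_cases hcover : x ≠ 0 ∧ ∃ k, x ∈ W k
  · obtain ⟨hx, k, hk⟩ := hcover
    have hother : ∀ j ≠ k, x ∉ W j := fun j hjk hj =>
      hx (AddSubgroup.disjoint_def.1 (hf.disjoint hjk) hj hk)
    rw [Fintype.sum_eq_single k fun j hjk => by simp [hother j hjk], hf.eq_of_mem x k hx hk]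
    simp [hx, hk]
  · have houtside : x = 0 ∨ ∀ k, x ∉ W k := by
      simpa only [not_and_or, not_not, not_exists] using hcover
    have hindicator (k : ι) : x ∉ (W k : Set G) \ {0} := by
      rintro ⟨hk, hx⟩
      exact houtside.elim hx (· k hk)
    simp [hf.eq_zero x houtside, hindicator]

variable [Fintype G]

lemma sum_indicator_sdiff_zero {R : Type*} [CommRing R] (H : AddSubgroup G) [Fintype H]
    (ψ : AddChar G R) :
    ∑ x, ((H : Set G) \ {0}).indicator ψ x = ∑ x : H, ψ x - 1 := by
  classical
  have hsum : ∑ x, (H : Set G).indicator ψ x = ∑ x : H, ψ x := by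
    simp only [Set.indicator_apply, ← sum_filter]
    exact sum_subtype _ (by simp) _
  rw [← hsum, Set.indicator_sdiff (by simp)]
  simp [Set.indicator_apply]

lemma norm_charSum_zero_le [Finite A] (χ : AddChar A ℂ) (f : G → A) :
    ‖charSum χ f 0‖ ≤ Nat.card G := by
  refine (norm_sum_le _ _).trans_eq ?_
  simp

namespace IsPartialSpreadFunction_s7

variable {W : ι → AddSubgroup G} {e : ι → A} {f : G → A}

lemma charSum_eq [Fintype ι] [∀ k, Fintype (W k)] (hf : IsPartialSpreadFunction_s7 W e f)
    (χ : AddChar A ℂ) (ψ : AddChar G ℂ) :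
    charSum χ f ψ = ∑ x, ψ x + ∑ k, (χ (e k) - 1) * (∑ x : W k, ψ x - 1) := by
  have hterm (x : G) : χ (f x) * ψ x =
      ψ x + ∑ k, (χ (e k) - 1) * ((W k : Set G) \ {0}).indicator ψ x := by
    rw [hf.addChar_apply χ x, add_mul, one_mul, sum_mul]
    simp only [mul_assoc, ← Set.indicator_mul_left, Pi.one_apply, one_mul]
  simp only [charSum, hterm, sum_add_distrib, ← sum_indicator_sdiff_zero, mul_sum]
  rw [sum_comm]

open Classical in
lemma re_charSum [Fintype ι] (hf : IsPartialSpreadFunction_s7 W e f) (χ : AddChar A ℂ)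
    (ψ : AddChar G ℂ) :
    (charSum χ f ψ).re = (∑ x, ψ x).re + ∑ k, (1 - (χ (e k)).re) *
      (1 - if ∀ x ∈ W k, ψ x = 1 then (Nat.card (W k) : ℝ) else 0) := by
  rw [hf.charSum_eq, Complex.add_re]
  congr 1
  rw [Complex.re_sum]
  refine sum_congr rfl fun k _ => ?_
  rw [sum_addSubgroup_eq_ite]
  split_ifs
  · simp only [Complex.mul_re, Complex.sub_re, Complex.sub_im, Complex.natCast_re,
      Complex.natCast_im, Complex.one_re, Complex.one_im]
    ring
  · simp

lemma re_charSum_le_of_ne_zero [Finite A] [Fintype ι] (hf : IsPartialSpreadFunction_s7 W e f)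
    (χ : AddChar A ℂ) {ψ : AddChar G ℂ} (hψ : ψ ≠ 0) :
    (charSum χ f ψ).re ≤ reDeficit χ e := by
  rw [hf.re_charSum, AddChar.sum_eq_zero_iff_ne_zero.2 hψ, Complex.zero_re, zero_add, reDeficit]
  refine sum_le_sum fun k _ => mul_le_of_le_one_right (one_sub_re_addChar_nonneg χ (e k)) ?_
  exact sub_le_self _ (by positivity)

lemma re_charSum_zero_le [Finite A] [Fintype ι] (hf : IsPartialSpreadFunction_s7 W e f)
    (χ : AddChar A ℂ) {m : ℕ} (hW : ∀ k, m ≤ Nat.card (W k)) :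
    (charSum χ f 0).re ≤ Nat.card G - (m - 1) * reDeficit χ e := by
  calc (charSum χ f 0).re
      = Nat.card G + ∑ k, (1 - (χ (e k)).re) * (1 - (Nat.card (W k) : ℝ)) := by
        simp [hf.re_charSum]
    _ ≤ Nat.card G + ∑ k, (1 - (χ (e k)).re) * (1 - (m : ℝ)) := by
        gcongr with k
        · exact one_sub_re_addChar_nonneg χ (e k)
        · exact hW k
    _ = Nat.card G - (m - 1) * reDeficit χ e := by
        rw [← sum_mul, reDeficit]
        ring

theorem re_charSum_add_add_lt_card [Finite A] [Finite ι] [Nonempty ι]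
    (hf : IsPartialSpreadFunction_s7 W e f) {χ : AddChar A ℂ} (he : ∀ k, χ (e k) ≠ 1)
    (hW : ∀ k, 8 ≤ Nat.card (W k)) {ψ₁ ψ₂ ψ₃ : AddChar G ℂ} (h₁₂ : ψ₁ ≠ ψ₂)
    (h₁₃ : ψ₁ ≠ ψ₃) (h₂₃ : ψ₂ ≠ ψ₃) :
    (charSum χ f ψ₁).re + (charSum χ f ψ₂).re + (charSum χ f ψ₃).re < Nat.card G := by
  have := Fintype.ofFinite ι
  have hpos := reDeficit_pos he
  have hlower : -(Nat.card G : ℝ) ≤ (charSum χ f 0).re :=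
    (abs_le.1 ((Complex.abs_re_le_norm _).trans (norm_charSum_zero_le χ f))).1
  have hzero := hf.re_charSum_zero_le χ hW
  have hne {ψ : AddChar G ℂ} (hψ : ψ ≠ 0) := hf.re_charSum_le_of_ne_zero χ hψ
  push_cast at hzero
  obtain rfl | h₁ := eq_or_ne ψ₁ 0
  · linarith [hne h₁₂.symm, hne h₁₃.symm]
  obtain rfl | h₂ := eq_or_ne ψ₂ 0
  · linarith [hne h₁, hne h₂₃.symm]
  obtain rfl | h₃ := eq_or_ne ψ₃ 0
  · linarith [hne h₁, hne h₂]
  · linarith [hne h₁, hne h₂, hne h₃]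

end IsPartialSpreadFunction_s7

end CharacterSums

section WalshTransform

variable {N : ℕ} [NeZero N]

lemma exp_two_pi_mul_I_div_pow_val (a : ZMod N) :
    Complex.exp (2 * Real.pi * Complex.I / N) ^ a.val = ZMod.stdAddChar a := by
  have hcoe := ZMod.stdAddChar_coe (N := N) (a.val : ℤ)
  rw [Int.cast_natCast, ZMod.natCast_zmod_val] at hcoe
  rw [hcoe, ← Complex.exp_nat_mul]
  congr 1
  push_cast
  ring

variable {σ : Type*} [Fintype σ]

/-- The character `x ↦ exp (-2πi (w · x) / N)` of `(ℤ/N)^σ`; its sign is that of the Walsh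
transform. -/
noncomputable def negDotProductChar (w : σ → ZMod N) : AddChar (σ → ZMod N) ℂ :=
  ZMod.stdAddChar.compAddMonoidHom (dotProductBilin (ZMod N) (ZMod N) (-w)).toAddMonoidHom

lemma negDotProductChar_apply (w x : σ → ZMod N) :
    negDotProductChar w x = ZMod.stdAddChar (-(w ⬝ᵥ x)) := by
  simp [negDotProductChar]

lemma negDotProductChar_injective :
    Function.Injective (negDotProductChar : (σ → ZMod N) → AddChar (σ → ZMod N) ℂ) := by
  classical
  intro v w hvw
  ext i
  have happly := DFunLike.congr_fun hvw (Pi.single i 1)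
  simpa [negDotProductChar_apply, ZMod.injective_stdAddChar.eq_iff] using happly

variable [DecidableEq σ]

/-- The Walsh transform of `f : (ℤ/N)^σ → ℤ/N`, with `ZMod.stdAddChar` playing the role of
`j ↦ exp (2πi/N) ^ j`. -/
noncomputable def walshTransform (f : (σ → ZMod N) → ZMod N) (w : σ → ZMod N) : ℂ :=
  ∑ x, ZMod.stdAddChar (f x - w ⬝ᵥ x)

lemma walshTransform_eq_charSum (f : (σ → ZMod N) → ZMod N) (w : σ → ZMod N) :
    walshTransform f w = charSum ZMod.stdAddChar f (negDotProductChar w) := by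
  simp only [walshTransform, charSum, negDotProductChar_apply, sub_eq_add_neg,
    AddChar.map_add_eq_mul]

lemma walshTransform_eq_sum_exp (f : (σ → ZMod N) → ZMod N) (w : σ → ZMod N) :
    walshTransform f w =
      ∑ x, Complex.exp (2 * Real.pi * Complex.I / N) ^ (f x - w ⬝ᵥ x).val := by
  simp only [walshTransform, exp_two_pi_mul_I_div_pow_val]

theorem stmt7_general {ι : Type*} [Finite ι] [Nonempty ι]
    {W : ι → AddSubgroup (σ → ZMod N)} {e : ι → ZMod N} {f : (σ → ZMod N) → ZMod N}
    (hf : IsPartialSpreadFunction_s7 W e f) (he : ∀ k, e k ≠ 0) (hW : ∀ k, 8 ≤ Nat.card (W k))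
    {w₁ w₂ w₃ : σ → ZMod N} (h₁₂ : w₁ ≠ w₂) (h₁₃ : w₁ ≠ w₃) (h₂₃ : w₂ ≠ w₃) :
    (walshTransform f w₁).re + (walshTransform f w₂).re + (walshTransform f w₃).re <
      N ^ Fintype.card σ := by
  have hχ (k : ι) : ZMod.stdAddChar (e k) ≠ 1 := by
    rw [← (ZMod.stdAddChar (N := N)).map_zero_eq_one, ZMod.injective_stdAddChar.ne_iff]
    exact he k
  have hlt := hf.re_charSum_add_add_lt_card hχ hW (negDotProductChar_injective.ne h₁₂)
    (negDotProductChar_injective.ne h₁₃) (negDotProductChar_injective.ne h₂₃)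
  simpa [walshTransform_eq_charSum] using hlt

end WalshTransform

lemma isPartialSpreadFunction_ite_s7 {R V A ι : Type*} [Ring R] [AddCommGroup V] [Module R V]
    [AddGroup A] {W : ι → Submodule R V} {p : ι → Prop} [DecidablePred p] {a b : A} {f : V → A}
    (hdisj : ∀ i j, i ≠ j → W i ⊓ W j = ⊥)
    (ha : ∀ x k, x ≠ 0 → x ∈ W k → p k → f x = a)
    (hb : ∀ x k, x ≠ 0 → x ∈ W k → ¬p k → f x = b)
    (hzero : ∀ x, (x = 0 ∨ ∀ k, x ∉ W k) → f x = 0) :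
    IsPartialSpreadFunction_s7 (fun k => (W k).toAddSubgroup) (fun k => if p k then a else b) f where
  disjoint i j hij := AddSubgroup.disjoint_def.2 fun hi hj =>
    Submodule.disjoint_def.1 (disjoint_iff.2 (hdisj i j hij)) _ hi hj
  eq_of_mem x k hx hk := by
    split_ifs with hpk
    exacts [ha x k hx hk hpk, hb x k hx hk hpk]
  eq_zero := hzero

theorem stmt7 (t n s : ℕ) (ht : n = 2 * t) (hn : 6 ≤ n) (hs : 1 ≤ s)
    (hs2 : 2 * s ≠ 3 ^ t + 1)
    (W : Fin (2 * s) → Submodule (ZMod 3) (Fin n → ZMod 3))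
    (hdim : ∀ k, Module.finrank (ZMod 3) (W k) = t)
    (hdisj : ∀ i j, i ≠ j → W i ⊓ W j = ⊥)
    (f : (Fin n → ZMod 3) → ZMod 3)
    (hf1 : ∀ (x : Fin n → ZMod 3) (k : Fin (2 * s)), x ≠ 0 → x ∈ W k → (k : ℕ) < s → f x = 1)
    (hf2 : ∀ (x : Fin n → ZMod 3) (k : Fin (2 * s)), x ≠ 0 → x ∈ W k → s ≤ (k : ℕ) → f x = 2)
    (hf0 : ∀ x : Fin n → ZMod 3, (x = 0 ∨ ∀ k, x ∉ W k) → f x = 0)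
    (walsh : (Fin n → ZMod 3) → ℂ)
    (hwalsh : ∀ w : Fin n → ZMod 3, walsh w = ∑ x : Fin n → ZMod 3,
      Complex.exp (2 * Real.pi * Complex.I / 3) ^ ((f x - w ⬝ᵥ x).val))
    :
    ∀ w1 w2 w3 : Fin n → ZMod 3, w1 ≠ w2 → w1 ≠ w3 → w2 ≠ w3 → w1 + w2 + w3 = 0 →
      (walsh w1).re + (walsh w2).re + (walsh w3).re ≠ 3 ^ n := by
  intro w1 w2 w3 h12 h13 h23 _
  have : Nonempty (Fin (2 * s)) := ⟨⟨0, by lia⟩⟩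
  have hspread := isPartialSpreadFunction_ite_s7 hdisj hf1
    (fun x k hx hk hks => hf2 x k hx hk (not_lt.1 hks)) hf0
  have hcard (k : Fin (2 * s)) : 8 ≤ Nat.card (W k) := by
    rw [Module.natCard_eq_pow_finrank (K := ZMod 3), hdim, Nat.card_zmod]
    calc 8 ≤ 3 ^ 3 := by norm_num
      _ ≤ 3 ^ t := Nat.pow_le_pow_right (by norm_num) (by lia)
  have hlt := stmt7_general hspread (fun k => by split_ifs <;> decide) hcard h12 h13 h23
  simpa [hwalsh, walshTransform_eq_sum_exp] using hlt.ne
end
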